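/- arXiv:2501.00716 — 7 statements merged into one kernel-verified Lean document; each statement's English description precedes it below -/
import Mathlib

section
/- Let f be a complex-analytic function defined on a neighborhood of b ∈ ℂ with f(b) = a and f'(b) ≠ 0, and let h be the analytic function defined near b by h(y) = (y − b)/(f(y) − a) for y ≠ b and h(b) = 1/f'(b). Then there exist r > 0 and an analytic function g on the disc {x : |x − a| < r} with g(a) = b and f(g(x)) = x for all x in the disc, and for every such x one has g(x) = b + ∑_{k=1}^∞ (d^{k−1}/dy^{k−1})(h(y)^k)|_{y=b} · (x − a)^k / k!, the series converging absolutely. -/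
/-!
Write `u = f - a`, so that `h * u = y - b` near `b`. The product rule gives `h' * u + h * u' = 1`,
whence `(k + 1) * h ^ (k + 2) * u' = (k + 1) * h ^ (k + 1) - (y - b) * (h ^ (k + 1))'`, and the
`(k + 1)`-st derivative of the right-hand side vanishes at `b`. Splitting off the value of `φ` at
`a` and inducting on `k`, one gets the change of variables formula
`(d/dy)^k (h ^ (k + 1) * f' * φ ∘ f) (b) = (d/dx)^k φ (a)` for every analytic `φ`. For `φ = g'`,
with `g` the local inverse, `f' * g' ∘ f = 1`, so this computes the Taylor coefficients of `g`.
-/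

open Filter Topology

variable {𝕜 E : Type*} [NontriviallyNormedField 𝕜] [NormedAddCommGroup E] [NormedSpace 𝕜 E]

theorem iteratedDeriv_succ_sub_smul {φ : 𝕜 → E} {b : 𝕜} {k : ℕ}
    (hφ : ContDiffAt 𝕜 (k + 1 : ℕ) φ b) :
    iteratedDeriv (k + 1) (fun y => (y - b) • φ y) b = (k + 1) • iteratedDeriv k φ b := by
  have leibniz := iteratedDerivWithin_smul (Set.mem_univ b) uniqueDiffOn_univ
    (f := fun y => y - b) (by fun_prop) hφ.contDiffWithinAt
  simp only [iteratedDerivWithin_univ] at leibniz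
  refine leibniz.trans ?_
  rw [Finset.sum_eq_single_of_mem 1 (by simp)]
  · simp
  · intro i _ hi
    have hderiv : iteratedDeriv i (fun y => y - b) b = 0 := by
      simp [iteratedDeriv_comp_sub_const (f := fun y => y), iteratedDeriv_fun_id, hi]
    simp [hderiv]

section Reciprocal

variable {f h : 𝕜 → 𝕜} {a b : 𝕜}

theorem eventually_mul_sub_eq_sub {f' : 𝕜} (hf : HasDerivAt f f' b) (hf' : f' ≠ 0)
    (hfa : f b = a) (hh : ∀ᶠ y in 𝓝[≠] b, h y = (y - b) / (f y - a)) :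
    ∀ᶠ y in 𝓝 b, h y * (f y - a) = y - b := by
  have hne : ∀ᶠ y in 𝓝[≠] b, f y ≠ a := hf.eventually_ne hf'
  filter_upwards [eventually_nhdsWithin_iff.1 (hh.and hne)] with y hy
  rcases eq_or_ne y b with rfl | hyb
  · simp [hfa]
  · obtain ⟨hhy, hfy⟩ := hy hyb
    rw [hhy, div_mul_cancel₀ _ (sub_ne_zero.2 hfy)]

theorem deriv_mul_sub_add_mul_deriv_eq_one {c : 𝕜} (hf : DifferentiableAt 𝕜 f c)
    (hh : DifferentiableAt 𝕜 h c) (hhf : ∀ᶠ y in 𝓝 c, h y * (f y - a) = y - b) :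
    deriv h c * (f c - a) + h c * deriv f c = 1 := by
  have product_rule : HasDerivAt (fun y => h y * (f y - a))
      (deriv h c * (f c - a) + h c * deriv f c) c :=
    hh.hasDerivAt.mul (hf.hasDerivAt.sub_const a)
  exact product_rule.unique (((hasDerivAt_id c).sub_const b).congr_of_eventuallyEq hhf)

variable [CompleteSpace 𝕜] [CharZero 𝕜]

theorem iteratedDeriv_succ_pow_mul_deriv_eq_zero (hf : AnalyticAt 𝕜 f b) (hh : AnalyticAt 𝕜 h b)
    (hhf : ∀ᶠ y in 𝓝 b, h y * (f y - a) = y - b) (k : ℕ) :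
    iteratedDeriv (k + 1) (fun y => h y ^ (k + 2) * deriv f y) b = 0 := by
  have hpow : AnalyticAt 𝕜 (fun y => h y ^ (k + 1)) b := hh.fun_pow _
  have hsub : AnalyticAt 𝕜 (fun y => y - b) b := by fun_prop
  have hdecomp : (fun y => (k + 1 : 𝕜) * (h y ^ (k + 2) * deriv f y)) =ᶠ[𝓝 b]
      fun y => (k + 1 : 𝕜) * h y ^ (k + 1) - (y - b) * deriv (fun y => h y ^ (k + 1)) y := by
    filter_upwards [hhf.eventually_nhds, hf.eventually_analyticAt, hh.eventually_analyticAt]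
      with y hy hfy hhy
    have hprod := deriv_mul_sub_add_mul_deriv_eq_one hfy.differentiableAt hhy.differentiableAt hy
    rw [deriv_fun_pow hhy.differentiableAt, ← hy.self_of_nhds, Nat.add_sub_cancel, Nat.cast_succ]
    linear_combination (k + 1 : 𝕜) * h y ^ (k + 1) * hprod
  have hzero : (k + 1 : 𝕜) * iteratedDeriv (k + 1) (fun y => h y ^ (k + 2) * deriv f y) b = 0 :=
    calc
      _ = iteratedDeriv (k + 1) (fun y => (k + 1 : 𝕜) * h y ^ (k + 1)
            - (y - b) * deriv (fun y => h y ^ (k + 1)) y) b := by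
        rw [← iteratedDeriv_const_mul_field, hdecomp.iteratedDeriv_eq]
      _ = (k + 1 : 𝕜) * iteratedDeriv (k + 1) (fun y => h y ^ (k + 1)) b
            - (k + 1) • iteratedDeriv k (deriv fun y => h y ^ (k + 1)) b := by
        rw [iteratedDeriv_fun_sub (analyticAt_const.fun_mul hpow).contDiffAt
          (hsub.fun_mul hpow.deriv).contDiffAt,
          iteratedDeriv_const_mul_field]
        exact congrArg _ (iteratedDeriv_succ_sub_smul hpow.deriv.contDiffAt)
      _ = 0 := by
        simp [iteratedDeriv_succ']
  exact (mul_eq_zero_iff_left k.cast_add_one_ne_zero).1 hzero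

theorem iteratedDeriv_pow_mul_deriv_smul_comp [CompleteSpace E] {φ : 𝕜 → E}
    (hf : AnalyticAt 𝕜 f b) (hh : AnalyticAt 𝕜 h b) (hfa : f b = a)
    (hhf : ∀ᶠ y in 𝓝 b, h y * (f y - a) = y - b) (hφ : AnalyticAt 𝕜 φ a) (k : ℕ) :
    iteratedDeriv k (fun y => (h y ^ (k + 1) * deriv f y) • φ (f y)) b =
      iteratedDeriv k φ a := by
  induction k generalizing φ with
  | zero =>
    have hhf' : h b * deriv f b = 1 := by
      simpa [hfa] using
        deriv_mul_sub_add_mul_deriv_eq_one hf.differentiableAt hh.differentiableAt hhf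
    simp [hhf', hfa]
  | succ k ih =>
    set ψ := dslope φ a
    obtain ⟨p, hp⟩ := hφ
    have hψ : AnalyticAt 𝕜 ψ a := hp.has_fpower_series_dslope_fslope.analyticAt
    have hφψ (x : 𝕜) : φ x = φ a + (x - a) • ψ x := by simp [ψ, sub_smul_dslope]
    have hψf : AnalyticAt 𝕜 (fun y => ψ (f y)) b := (hfa ▸ hψ).fun_comp hf
    have hpow (m : ℕ) : AnalyticAt 𝕜 (fun y => h y ^ m * deriv f y) b := (hh.fun_pow m).mul hf.deriv
    have hsub : AnalyticAt 𝕜 (fun y => y - b) b := by fun_prop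
    have hdecomp : (fun y => (h y ^ (k + 2) * deriv f y) • φ (f y)) =ᶠ[𝓝 b]
        fun y => (h y ^ (k + 2) * deriv f y) • φ a
          + (y - b) • (h y ^ (k + 1) * deriv f y) • ψ (f y) := by
      filter_upwards [hhf] with y hy
      rw [hφψ (f y), ← hy]
      module
    calc
      _ = iteratedDeriv (k + 1) (fun y => (h y ^ (k + 2) * deriv f y) • φ a) b
            + iteratedDeriv (k + 1)
              (fun y => (y - b) • (h y ^ (k + 1) * deriv f y) • ψ (f y)) b := by
        rw [hdecomp.iteratedDeriv_eq]
        exact iteratedDeriv_fun_add ((hpow _).fun_smul analyticAt_const).contDiffAt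
          (hsub.fun_smul ((hpow _).fun_smul hψf)).contDiffAt
      _ = (k + 1) • iteratedDeriv k ψ a := by
        rw [iteratedDeriv_smul_const (hpow _).contDiffAt,
          iteratedDeriv_succ_pow_mul_deriv_eq_zero hf hh hhf, zero_smul, zero_add,
          iteratedDeriv_succ_sub_smul ((hpow _).fun_smul hψf).contDiffAt, ih hψ]
      _ = iteratedDeriv (k + 1) φ a := by
        rw [← iteratedDeriv_succ_sub_smul hψ.contDiffAt, funext hφψ,
          iteratedDeriv_const_add k.succ_pos]

theorem iteratedDeriv_succ_of_leftInverse {g : 𝕜 → 𝕜} (hf : AnalyticAt 𝕜 f b)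
    (hh : AnalyticAt 𝕜 h b) (hfa : f b = a) (hhf : ∀ᶠ y in 𝓝 b, h y * (f y - a) = y - b)
    (hg : AnalyticAt 𝕜 g a) (hgf : ∀ᶠ y in 𝓝 b, g (f y) = y) (k : ℕ) :
    iteratedDeriv (k + 1) g a = iteratedDeriv k (fun y => h y ^ (k + 1)) b := by
  subst hfa
  have hchain : ∀ᶠ y in 𝓝 b, deriv f y * deriv g (f y) = 1 := by
    filter_upwards [hf.eventually_analyticAt, hf.continuousAt.eventually hg.eventually_analyticAt,
      hgf.eventually_nhds] with y hfy hgy hy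
    rw [mul_comm]
    exact (hgy.differentiableAt.hasDerivAt.comp y hfy.differentiableAt.hasDerivAt).unique
      ((hasDerivAt_id y).congr_of_eventuallyEq hy)
  rw [iteratedDeriv_succ', ← iteratedDeriv_pow_mul_deriv_smul_comp hf hh rfl hhf hg.deriv]
  refine EventuallyEq.iteratedDeriv_eq k ?_
  filter_upwards [hchain] with y hy
  rw [smul_eq_mul, mul_assoc, hy, mul_one]

end Reciprocal

theorem eventually_summable_norm_and_hasSum_taylor [CompleteSpace 𝕜] [CharZero 𝕜] {g : 𝕜 → 𝕜}
    {a : 𝕜} (hg : AnalyticAt 𝕜 g a) :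
    ∀ᶠ x in 𝓝 a, Summable (fun k : ℕ => ‖iteratedDeriv k g a * (x - a) ^ k / (k.factorial : 𝕜)‖) ∧
      HasSum (fun k : ℕ => iteratedDeriv k g a * (x - a) ^ k / (k.factorial : 𝕜)) (g x) := by
  obtain ⟨r, hr⟩ := hg.hasFPowerSeriesAt
  filter_upwards [Metric.eball_mem_nhds a hr.r_pos] with x hx
  have hterm (k : ℕ) : FormalMultilinearSeries.ofScalars 𝕜
      (fun n => iteratedDeriv n g a / (n.factorial : 𝕜)) k (fun _ => x - a) =
        iteratedDeriv k g a * (x - a) ^ k / (k.factorial : 𝕜) := by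
    rw [FormalMultilinearSeries.ofScalars_apply_eq, smul_eq_mul, div_mul_eq_mul_div]
  simp only [← hterm]
  have hxr : x - a ∈ Metric.eball 0 r := by
    simpa [edist_eq_enorm_sub] using hx
  exact ⟨FormalMultilinearSeries.summable_norm_apply _ (Metric.eball_subset_eball hr.r_le hxr),
    hr.hasSum_sub hx⟩

theorem lagrange_inversion_analytic_general [CompleteSpace 𝕜] [CharZero 𝕜] {f h : 𝕜 → 𝕜} {a b : 𝕜}
    (hf : AnalyticAt 𝕜 f b) (hh : AnalyticAt 𝕜 h b) (hfa : f b = a) (hfb : deriv f b ≠ 0)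
    (hhy : ∀ᶠ y in 𝓝[≠] b, h y = (y - b) / (f y - a)) :
    ∃ r > (0 : ℝ), ∃ g : 𝕜 → 𝕜,
      AnalyticOnNhd 𝕜 g (Metric.ball a r) ∧
      g a = b ∧
      (∀ x ∈ Metric.ball a r, f (g x) = x) ∧
      (∀ x ∈ Metric.ball a r,
        Summable (fun k : ℕ =>
          ‖iteratedDeriv k (fun y => (h y) ^ (k + 1)) b * (x - a) ^ (k + 1) /
            ((k + 1).factorial : 𝕜)‖) ∧
        g x = b + ∑' k : ℕ,
          iteratedDeriv k (fun y => (h y) ^ (k + 1)) b * (x - a) ^ (k + 1) /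
            ((k + 1).factorial : 𝕜)) := by
  have hhf := eventually_mul_sub_eq_sub hf.differentiableAt.hasDerivAt hfb hfa hhy
  set g := hf.hasStrictDerivAt.localInverse f (deriv f b) b hfb
  have hg : AnalyticAt 𝕜 g a := hfa ▸ hf.analyticAt_localInverse hfb
  have hgf : ∀ᶠ y in 𝓝 b, g (f y) = y := hf.hasStrictDerivAt.eventually_left_inverse hfb
  have hfg : ∀ᶠ x in 𝓝 a, f (g x) = x := hfa ▸ hf.hasStrictDerivAt.eventually_right_inverse hfb
  have hga : g a = b := hfa ▸ hgf.self_of_nhds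
  obtain ⟨r, hr, hball⟩ := Metric.eventually_nhds_iff_ball.1
    (hg.eventually_analyticAt.and (hfg.and (eventually_summable_norm_and_hasSum_taylor hg)))
  refine ⟨r, hr, g, fun x hx => (hball x hx).1, hga, fun x hx => (hball x hx).2.1, fun x hx => ?_⟩
  obtain ⟨-, -, hsummable, hsum⟩ := hball x hx
  simp only [← iteratedDeriv_succ_of_leftInverse hf hh hfa hhf hg hgf]
  refine ⟨(summable_nat_add_iff 1).2 hsummable, ?_⟩
  simpa [hga] using hsum.tsum_eq.symm.trans hsum.summable.tsum_eq_zero_add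

/-- **Lagrange Inversion Formula** (analytic version).
If `f` is analytic near `b` with `f b = a` and `f' b ≠ 0`, and `h` is the analytic
extension of `y ↦ (y - b)/(f y - a)` across `y = b` (with `h b = 1 / f' b`), then there is
a local analytic inverse `g` of `f` on a disc around `a`, given by the absolutely
convergent series `g x = b + ∑_{k ≥ 1} (d/dy)^{k-1} (h y)^k |_{y=b} · (x-a)^k / k!`. -/
theorem lagrange_inversion_analytic
    (f h : ℂ → ℂ) (a b : ℂ) (s : Set ℂ) (hs : s ∈ nhds b)
    (hf : AnalyticOnNhd ℂ f s) (hh : AnalyticOnNhd ℂ h s)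
    (hfa : f b = a) (hfb : deriv f b ≠ 0)
    (hhy : ∀ y ∈ s, y ≠ b → h y = (y - b) / (f y - a))
    (hhb : h b = 1 / deriv f b) :
    ∃ r > (0 : ℝ), ∃ g : ℂ → ℂ,
      AnalyticOnNhd ℂ g (Metric.ball a r) ∧
      g a = b ∧
      (∀ x ∈ Metric.ball a r, f (g x) = x) ∧
      (∀ x ∈ Metric.ball a r,
        Summable (fun k : ℕ =>
          ‖iteratedDeriv k (fun y => (h y) ^ (k + 1)) b * (x - a) ^ (k + 1) /
            ((k + 1).factorial : ℂ)‖) ∧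
        g x = b + ∑' k : ℕ,
          iteratedDeriv k (fun y => (h y) ^ (k + 1)) b * (x - a) ^ (k + 1) /
            ((k + 1).factorial : ℂ)) := by
  have hb : b ∈ s := mem_of_mem_nhds hs
  refine lagrange_inversion_analytic_general (hf b hb) (hh b hb) hfa hfb ?_
  filter_upwards [nhdsWithin_le_nhds hs, self_mem_nhdsWithin] with y hys hyb using hhy y hys hyb
end

section
/- Let α be a finite type with decidable equality, let σ and τ be disjoint cyclic permutations of α, and let a be in the support of σ and b in the support of τ. Then the product (swap a b) · σ · τ (composition applying σ·τ first and then the transposition swapping a and b) is a single cycle whose support equals the union of the supports of σ and τ; in particular its support has cardinality |support σ| + |support τ|. -/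
/-!
Put `g = swap a b * f`. Following `g` from `a` runs through the `f`-cycle of `a` until it is
about to return to `a`; there the transposition diverts it to `b`. So if `a` and `b` lie in
different `f`-cycles and that of `a` is finite, then `a` and `b` share a `g`-cycle. Once they do,
`g x` and `f x`, which differ at most by exchanging `a` and `b`, always share a `g`-cycle, so that
every `f`-cycle lies inside a `g`-cycle. Taking `f = σ * τ`, both `σ` and `τ` are absorbed into
the `g`-cycle through `a`.
-/

section

open Equiv Equiv.Perm

variable {α : Type*} {f g σ τ : Perm α} {a b x y : α}

theorem sameCycle_of_forall_sameCycle_apply (h : ∀ z, g.SameCycle z (f z))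
    (hxy : f.SameCycle x y) : g.SameCycle x y := by
  obtain ⟨n, rfl⟩ := hxy
  induction n with
  | zero => rfl
  | succ n ih => simpa [add_comm _ (1 : ℤ), zpow_add] using ih.trans (h _)
  | pred n ih =>
    have hstep := h ((f ^ (-(n : ℤ) - 1)) x)
    rw [← mul_apply, ← zpow_one_add, add_sub_cancel] at hstep
    exact ih.trans hstep.symm

theorem mul_zpow_apply_of_apply_eq_self (hc : Commute σ τ) (hx : τ x = x) (n : ℤ) :
    ((σ * τ) ^ n) x = (σ ^ n) x := by
  rw [hc.mul_zpow, mul_apply, zpow_apply_eq_self_of_apply_eq_self hx]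

theorem sameCycle_mul_iff_of_apply_eq_self (hc : Commute σ τ) (hx : τ x = x) :
    (σ * τ).SameCycle x y ↔ σ.SameCycle x y := by
  simp only [SameCycle, mul_zpow_apply_of_apply_eq_self hc hx]

theorem mem_periodicPts_mul_of_apply_eq_self (hc : Commute σ τ) (hσ : IsOfFinOrder σ)
    (hx : τ x = x) : x ∈ Function.periodicPts (σ * τ) := by
  obtain ⟨n, hn, hpow⟩ := isOfFinOrder_iff_pow_eq_one.1 hσ
  refine ⟨n, hn, ?_⟩
  have h := mul_zpow_apply_of_apply_eq_self hc hx n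
  rwa [zpow_natCast, zpow_natCast, hpow, ← iterate_eq_pow] at h

theorem not_sameCycle_mul_of_disjoint (hd : σ.Disjoint τ) (ha : σ a ≠ a) (hb : τ b ≠ b) :
    ¬ (σ * τ).SameCycle a b := by
  rw [sameCycle_mul_iff_of_apply_eq_self hd.commute ((hd a).resolve_left ha)]
  exact fun h => ha (h.apply_eq_self_iff.2 ((hd b).resolve_right hb))

variable [DecidableEq α]

theorem sameCycle_swap_mul_pow_apply (hab : ¬ f.SameCycle a b) (n : ℕ) :
    (swap a b * f).SameCycle a ((f ^ n) a) := by
  induction n with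
  | zero => rfl
  | succ n ih =>
    by_cases hret : (f ^ (n + 1)) a = a
    · rw [hret]
    · have hne : (f ^ (n + 1)) a ≠ b := fun h => hab ⟨n + 1, mod_cast h⟩
      have hstep : (swap a b * f) ((f ^ n) a) = (f ^ (n + 1)) a := by
        rw [mul_apply, ← mul_apply f, ← pow_succ', swap_apply_of_ne_of_ne hret hne]
      exact hstep ▸ sameCycle_apply_right.2 ih

theorem sameCycle_swap_mul_of_mem_periodicPts (hab : ¬ f.SameCycle a b)
    (ha : a ∈ Function.periodicPts f) : (swap a b * f).SameCycle a b := by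
  obtain ⟨_ | n, hn, hper⟩ := ha
  · exact absurd hn (lt_irrefl 0)
  · have hlast : f ((f ^ n) a) = a := by
      rw [← mul_apply, ← pow_succ', ← iterate_eq_pow]
      exact hper
    have hdivert : (swap a b * f) ((f ^ n) a) = b := by
      rw [mul_apply, hlast, swap_apply_left]
    have hsame := sameCycle_apply_right.2 (sameCycle_swap_mul_pow_apply hab n)
    rwa [hdivert] at hsame

theorem sameCycle_swap_mul_of_sameCycle (hab : (swap a b * f).SameCycle a b)
    (hxy : f.SameCycle x y) : (swap a b * f).SameCycle x y := by
  refine sameCycle_of_forall_sameCycle_apply (fun z => ?_) hxy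
  rw [← sameCycle_apply_left, mul_apply]
  rcases eq_or_ne (f z) a with ha | ha
  · rw [ha, swap_apply_left]
    exact hab.symm
  rcases eq_or_ne (f z) b with hb | hb
  · rwa [hb, swap_apply_right]
  · rw [swap_apply_of_ne_of_ne ha hb]

theorem swap_mul_apply_eq_self_iff (ha : f a ≠ a) (hb : f b ≠ b) (hab : f a ≠ b) (hba : f b ≠ a) :
    (swap a b * f) x = x ↔ f x = x := by
  rw [mul_apply, swap_apply_eq_iff]
  rcases eq_or_ne x a with rfl | hxa
  · simp [ha, hab]
  rcases eq_or_ne x b with rfl | hxb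
  · simp [hb, hba]
  · rw [swap_apply_of_ne_of_ne hxa hxb]

theorem sameCycle_swap_mul_mul_of_disjoint (hd : σ.Disjoint τ)
    (hfin : IsOfFinOrder σ ∨ IsOfFinOrder τ) (ha : σ a ≠ a) (hb : τ b ≠ b) :
    (swap a b * (σ * τ)).SameCycle a b := by
  have hab := not_sameCycle_mul_of_disjoint hd ha hb
  rcases hfin with hσ | hτ
  · exact sameCycle_swap_mul_of_mem_periodicPts hab
      (mem_periodicPts_mul_of_apply_eq_self hd.commute hσ ((hd a).resolve_left ha))
  · have hper : b ∈ Function.periodicPts (σ * τ) := by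
      rw [hd.commute.eq]
      exact mem_periodicPts_mul_of_apply_eq_self hd.commute.symm hτ ((hd b).resolve_right hb)
    rw [swap_comm]
    exact (sameCycle_swap_mul_of_mem_periodicPts (fun h => hab h.symm) hper).symm

theorem swap_mul_mul_apply_eq_self_iff_of_disjoint (hd : σ.Disjoint τ) (ha : σ a ≠ a)
    (hb : τ b ≠ b) : (swap a b * (σ * τ)) x = x ↔ σ x = x ∧ τ x = x := by
  have hab := not_sameCycle_mul_of_disjoint hd ha hb
  rw [swap_mul_apply_eq_self_iff, hd.mul_apply_eq_iff]
  · exact fun h => ha (hd.mul_apply_eq_iff.1 h).1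
  · exact fun h => hb (hd.mul_apply_eq_iff.1 h).2
  · exact fun h => hab (h ▸ sameCycle_apply_right.2 (SameCycle.refl _ a))
  · exact fun h => hab (h ▸ sameCycle_apply_left.2 (SameCycle.refl _ b))

theorem isCycle_swap_mul_mul_of_disjoint (hσ : σ.IsCycle) (hτ : τ.IsCycle) (hd : σ.Disjoint τ)
    (hfin : IsOfFinOrder σ ∨ IsOfFinOrder τ) (ha : σ a ≠ a) (hb : τ b ≠ b) :
    (swap a b * (σ * τ)).IsCycle := by
  have hjoin := sameCycle_swap_mul_mul_of_disjoint hd hfin ha hb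
  have hfix {x : α} := swap_mul_mul_apply_eq_self_iff_of_disjoint (x := x) hd ha hb
  refine ⟨a, fun h => ha (hfix.1 h).1, fun x hx => ?_⟩
  rcases not_and_or.1 (mt hfix.2 hx) with hx | hx
  · have hax : (σ * τ).SameCycle a x :=
      (sameCycle_mul_iff_of_apply_eq_self hd.commute ((hd a).resolve_left ha)).2
        (hσ.sameCycle ha hx)
    exact sameCycle_swap_mul_of_sameCycle hjoin hax
  · have hbx : (σ * τ).SameCycle b x := by
      rw [hd.commute.eq, sameCycle_mul_iff_of_apply_eq_self hd.commute.symm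
        ((hd b).resolve_right hb)]
      exact hτ.sameCycle hb hx
    exact hjoin.trans (sameCycle_swap_mul_of_sameCycle hjoin hbx)

end

theorem join_case_general {α : Type*} [DecidableEq α]
    (σ τ : Equiv.Perm α) (hσ : σ.IsCycle) (hτ : τ.IsCycle) (hd : σ.Disjoint τ)
    (hfin : IsOfFinOrder σ ∨ IsOfFinOrder τ) (a b : α) (ha : σ a ≠ a) (hb : τ b ≠ b) :
    (Equiv.swap a b * σ * τ).IsCycle ∧
    {x | (Equiv.swap a b * σ * τ) x ≠ x} = {x | σ x ≠ x} ∪ {x | τ x ≠ x} ∧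
    {x | (Equiv.swap a b * σ * τ) x ≠ x}.encard =
      {x | σ x ≠ x}.encard + {x | τ x ≠ x}.encard := by
  rw [mul_assoc]
  have hsupp : {x | (Equiv.swap a b * (σ * τ)) x ≠ x} = {x | σ x ≠ x} ∪ {x | τ x ≠ x} := by
    ext x
    exact (swap_mul_mul_apply_eq_self_iff_of_disjoint hd ha hb).not.trans not_and_or
  have hdisj : Disjoint {x | σ x ≠ x} {x | τ x ≠ x} :=
    Set.disjoint_left.2 fun x hx hx' => (hd x).elim hx hx'
  exact ⟨isCycle_swap_mul_mul_of_disjoint hσ hτ hd hfin ha hb, hsupp,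
    hsupp ▸ Set.encard_union_eq hdisj⟩

/-- The **join** case of the cut-and-join analysis: multiplying by a transposition
`(a b)` whose entries lie in two disjoint cycles `σ` and `τ` joins them into a single
cycle whose support is the union of the two supports, of cardinality
`|support σ| + |support τ|`. -/
theorem join_case {α : Type*} [Fintype α] [DecidableEq α]
    (σ τ : Equiv.Perm α) (hσ : σ.IsCycle) (hτ : τ.IsCycle) (hd : σ.Disjoint τ)
    (a b : α) (ha : a ∈ σ.support) (hb : b ∈ τ.support) :
    (Equiv.swap a b * σ * τ).IsCycle ∧
    (Equiv.swap a b * σ * τ).support = σ.support ∪ τ.support ∧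
    (Equiv.swap a b * σ * τ).support.card = σ.support.card + τ.support.card := by
  have h := join_case_general σ τ hσ hτ hd (.inl (isOfFinOrder_of_finite σ)) a b
    (Equiv.Perm.mem_support.1 ha) (Equiv.Perm.mem_support.1 hb)
  simp only [← Equiv.Perm.coe_support_eq_set_support, Set.encard_coe_eq_coe_finsetCard] at h
  exact_mod_cast h
end

section
/- Let α be a finite type with decidable equality, let σ be a cyclic permutation of α with support of cardinality n, let a be in the support of σ, and let k be an integer with 1 ≤ k ≤ n − 1; set b = σ^k(a). Then for the permutation ρ = (swap a b) · σ (composition applying σ first and then the transposition swapping a and b): every point outside the support of σ is fixed by ρ, the ρ-orbit of a and the ρ-orbit of b are disjoint, they have cardinalities k and n − k respectively, and their union equals the support of σ. -/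
/-!
For `ρ = (a b) σ` with `b = σ^k a`, the `ρ`-walk from `a` follows the `σ`-walk
`a, σ a, …, σ^(k-1) a` and then, instead of reaching `b`, returns to `a`; so the `ρ`-orbit of `a`
consists of these `k` points. The situation is symmetric in `a` and `b`: if `a` has `σ`-period `n`,
then so does `b`, and `a = σ^(n-k) b`. Hence the `ρ`-orbit of `b` consists of the remaining `n - k`
points.
-/

section

open Equiv Equiv.Perm Function

variable {α : Type*}

theorem ncard_setOf_sameCycle (f : Perm α) (x : α) :
    {y | f.SameCycle x y}.ncard = minimalPeriod f x := by
  have orbit_eq : {y | f.SameCycle x y} = MulAction.orbit (Subgroup.zpowers f) x := by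
    ext y
    simp [MulAction.mem_orbit_iff, SameCycle, Subgroup.smul_def]
  rw [orbit_eq, ← Nat.card_coe_set_eq, Nat.card_congr (MulAction.orbitZPowersEquiv f x),
    Nat.card_zmod]
  rfl

theorem sameCycle_iff_exists_lt_minimalPeriod {f : Perm α} {x y : α} (hx : x ∈ periodicPts f) :
    f.SameCycle x y ↔ ∃ i < minimalPeriod f x, (f ^ i) x = y := by
  refine ⟨fun ⟨m, hm⟩ ↦ ?_, fun ⟨i, _, hi⟩ ↦ ⟨i, by simpa using hi⟩⟩
  have period_pos : (0 : ℤ) < minimalPeriod f x :=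
    mod_cast minimalPeriod_pos_of_mem_periodicPts hx
  obtain ⟨i, hi⟩ := Int.eq_ofNat_of_zero_le (m.emod_nonneg period_pos.ne')
  refine ⟨i, by exact_mod_cast hi ▸ m.emod_lt_of_pos period_pos, ?_⟩
  rw [← hm, ← zpow_natCast, ← hi]
  exact MulAction.zpow_smul_mod_minimalPeriod f x m

theorem pow_minimalPeriod_sub_apply {f : Perm α} {x y : α} {k : ℕ} (hy : (f ^ k) x = y)
    (hk : k ≤ minimalPeriod f x) : (f ^ (minimalPeriod f x - k)) y = x := by
  rw [← hy, ← mul_apply, ← pow_add, Nat.sub_add_cancel hk]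
  exact iterate_minimalPeriod

theorem pow_apply_ne_self_of_lt_minimalPeriod {f : Perm α} {x y : α} {j : ℕ}
    (hy : f.SameCycle x y) (hj : 0 < j) (hjx : j < minimalPeriod f x) : (f ^ j) y ≠ y := by
  have setOf_eq : {z | f.SameCycle y z} = {z | f.SameCycle x z} :=
    Set.ext fun _ ↦ ⟨hy.trans, hy.symm.trans⟩
  have period_eq : minimalPeriod f y = minimalPeriod f x := by
    rw [← ncard_setOf_sameCycle, setOf_eq, ncard_setOf_sameCycle]
  exact not_isPeriodicPt_of_pos_of_lt_minimalPeriod hj.ne' (period_eq ▸ hjx)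

variable [DecidableEq α] {σ : Perm α} {a b : α} {k : ℕ}

theorem sameCycle_iff_mem_support [Fintype α] (hσ : σ.IsCycle) (ha : a ∈ σ.support) {x : α} :
    σ.SameCycle a x ↔ x ∈ σ.support := by
  rw [Perm.mem_support]
  exact (isCycle_iff_sameCycle (Perm.mem_support.1 ha)).1 hσ

theorem minimalPeriod_eq_card_support [Fintype α] (hσ : σ.IsCycle) (ha : a ∈ σ.support) :
    minimalPeriod σ a = σ.support.card := by
  simp only [← ncard_setOf_sameCycle, sameCycle_iff_mem_support hσ ha]
  exact Set.ncard_coe_finset _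

theorem swap_mul_apply_of_not_sameCycle {x : α} (hab : σ.SameCycle a b)
    (hx : ¬ σ.SameCycle a x) : (swap a b * σ) x = σ x := by
  rw [← sameCycle_apply_right] at hx
  exact swap_apply_of_ne_of_ne (fun h ↦ hx (h.symm.sameCycle σ)) fun h ↦ hx (h ▸ hab)

theorem swap_mul_pow_apply_left (hb : (σ ^ k) a = b)
    (ne_self : ∀ j, 0 < j → j < k → (σ ^ j) a ≠ a)
    {i : ℕ} (hi : i < k) : ((swap a b * σ) ^ i) a = (σ ^ i) a := by
  induction i with
  | zero => rfl
  | succ i ih =>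
    have ne_b : (σ ^ (i + 1)) a ≠ b := by
      rw [← hb]
      exact fun h_eq ↦
        ne_self (k - (i + 1)) (by lia) (by lia) (iterate_cancel σ.injective h_eq.symm)
    rw [pow_succ', mul_apply, ih (by lia), mul_apply, ← mul_apply σ, ← pow_succ',
      swap_apply_of_ne_of_ne (ne_self (i + 1) i.succ_pos hi) ne_b]

theorem swap_mul_pow_apply_left_self (hk : 0 < k) (hb : (σ ^ k) a = b)
    (ne_self : ∀ j, 0 < j → j < k → (σ ^ j) a ≠ a) : ((swap a b * σ) ^ k) a = a := by
  obtain ⟨m, rfl⟩ := Nat.exists_eq_add_one_of_ne_zero hk.ne'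
  rw [pow_succ', mul_apply, swap_mul_pow_apply_left hb ne_self m.lt_succ_self, mul_apply,
    ← mul_apply σ, ← pow_succ', hb, swap_apply_right]

theorem minimalPeriod_swap_mul_left (hk : 0 < k) (hb : (σ ^ k) a = b)
    (ne_self : ∀ j, 0 < j → j < k → (σ ^ j) a ≠ a) : minimalPeriod (swap a b * σ) a = k := by
  have periodic : IsPeriodicPt (swap a b * σ) k a := swap_mul_pow_apply_left_self hk hb ne_self
  refine (periodic.minimalPeriod_le hk).eq_of_not_lt fun hlt ↦
    ne_self _ (periodic.minimalPeriod_pos hk) hlt ?_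
  rw [← swap_mul_pow_apply_left hb ne_self hlt]
  exact iterate_minimalPeriod

theorem sameCycle_swap_mul_left_iff (hk : 0 < k) (hb : (σ ^ k) a = b)
    (ne_self : ∀ j, 0 < j → j < k → (σ ^ j) a ≠ a) {x : α} :
    (swap a b * σ).SameCycle a x ↔ ∃ i < k, (σ ^ i) a = x := by
  have period := minimalPeriod_swap_mul_left hk hb ne_self
  have periodic : a ∈ periodicPts (swap a b * σ) :=
    minimalPeriod_pos_iff_mem_periodicPts.1 (period ▸ hk)
  rw [sameCycle_iff_exists_lt_minimalPeriod periodic, period]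
  exact exists_congr fun i ↦ and_congr_right fun hi ↦ by rw [swap_mul_pow_apply_left hb ne_self hi]

theorem not_sameCycle_swap_mul (hk : 0 < k) (hb : (σ ^ k) a = b)
    (ne_self : ∀ j, 0 < j → j ≤ k → (σ ^ j) a ≠ a) : ¬ (swap a b * σ).SameCycle a b := by
  rw [sameCycle_swap_mul_left_iff hk hb fun j hj hjk ↦ ne_self j hj hjk.le]
  rintro ⟨i, hi, h_eq⟩
  exact ne_self (k - i) (by lia) (by lia) (iterate_cancel σ.injective (hb.trans h_eq.symm))

theorem minimalPeriod_swap_mul_right (hb : (σ ^ k) a = b) (hk : k < minimalPeriod σ a) :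
    minimalPeriod (swap a b * σ) b = minimalPeriod σ a - k := by
  rw [swap_comm]
  exact minimalPeriod_swap_mul_left (Nat.sub_pos_of_lt hk) (pow_minimalPeriod_sub_apply hb hk.le)
    fun j hj hjk ↦ pow_apply_ne_self_of_lt_minimalPeriod ⟨k, hb⟩ hj (by lia)

theorem sameCycle_swap_mul_right_iff (hb : (σ ^ k) a = b) (hk : k < minimalPeriod σ a) {x : α} :
    (swap a b * σ).SameCycle b x ↔ ∃ i < minimalPeriod σ a - k, (σ ^ i) b = x := by
  rw [swap_comm]
  exact sameCycle_swap_mul_left_iff (Nat.sub_pos_of_lt hk) (pow_minimalPeriod_sub_apply hb hk.le)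
    fun j hj hjk ↦ pow_apply_ne_self_of_lt_minimalPeriod ⟨k, hb⟩ hj (by lia)

theorem sameCycle_swap_mul_or_iff (hk : 0 < k) (hb : (σ ^ k) a = b) (hk' : k < minimalPeriod σ a)
    {x : α} :
    (swap a b * σ).SameCycle a x ∨ (swap a b * σ).SameCycle b x ↔ σ.SameCycle a x := by
  have ne_self : ∀ j, 0 < j → j < k → (σ ^ j) a ≠ a := fun j hj hjk ↦
    pow_apply_ne_self_of_lt_minimalPeriod .rfl hj (hjk.trans hk')
  rw [sameCycle_swap_mul_left_iff hk hb ne_self, sameCycle_swap_mul_right_iff hb hk',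
    sameCycle_iff_exists_lt_minimalPeriod
      (minimalPeriod_pos_iff_mem_periodicPts.1 (hk.trans hk'))]
  constructor
  · rintro (⟨i, hi, rfl⟩ | ⟨i, hi, rfl⟩)
    · exact ⟨i, hi.trans hk', rfl⟩
    · exact ⟨i + k, by lia, by rw [pow_add, mul_apply, hb]⟩
  · rintro ⟨i, hi, rfl⟩
    rcases lt_or_ge i k with hik | hki
    · exact .inl ⟨i, hik, rfl⟩
    · exact .inr ⟨i - k, by lia, by rw [← hb, ← mul_apply, ← pow_add, Nat.sub_add_cancel hki]⟩

theorem cut_case_general (σ : Perm α) (a : α) (k : ℕ) (hk : 0 < k) (hk' : k < minimalPeriod σ a)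
    (b : α) (hb : b = (σ ^ k) a) :
    (∀ x, ¬ σ.SameCycle a x → (swap a b * σ) x = σ x) ∧
    Disjoint {x | (swap a b * σ).SameCycle a x} {x | (swap a b * σ).SameCycle b x} ∧
    {x | (swap a b * σ).SameCycle a x}.ncard = k ∧
    {x | (swap a b * σ).SameCycle b x}.ncard = minimalPeriod σ a - k ∧
    {x | (swap a b * σ).SameCycle a x} ∪ {x | (swap a b * σ).SameCycle b x}
      = {x | σ.SameCycle a x} := by
  have ne_self : ∀ j, 0 < j → j ≤ k → (σ ^ j) a ≠ a := fun j hj hjk ↦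
    pow_apply_ne_self_of_lt_minimalPeriod .rfl hj (hjk.trans_lt hk')
  refine ⟨fun x hx ↦ swap_mul_apply_of_not_sameCycle ⟨k, hb.symm⟩ hx, ?_, ?_, ?_, ?_⟩
  · exact Set.disjoint_left.2 fun x hax hbx ↦
      not_sameCycle_swap_mul hk hb.symm ne_self (hax.trans hbx.symm)
  · rw [ncard_setOf_sameCycle,
      minimalPeriod_swap_mul_left hk hb.symm fun j hj hjk ↦ ne_self j hj hjk.le]
  · rw [ncard_setOf_sameCycle, minimalPeriod_swap_mul_right hb.symm hk']
  · ext x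
    exact sameCycle_swap_mul_or_iff hk hb.symm hk'

end

/-- The **cut** case of the cut-and-join analysis: if `σ` is a cycle with support of
cardinality `n`, `a ∈ support σ` and `b = σ^k a` with `1 ≤ k ≤ n - 1`, then for
`ρ = (a b) · σ`: every point outside `support σ` is fixed by `ρ`, the `ρ`-orbits of `a`
and of `b` (in the sense of `SameCycle`) are disjoint, have cardinalities `k` and `n - k`
respectively, and their union is the support of `σ`. -/
theorem cut_case {α : Type*} [Fintype α] [DecidableEq α]
    (σ : Equiv.Perm α) (hσ : σ.IsCycle) (n : ℕ) (hn : σ.support.card = n)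
    (a : α) (ha : a ∈ σ.support) (k : ℕ) (hk1 : 1 ≤ k) (hk2 : k ≤ n - 1)
    (b : α) (hb : b = (σ ^ k) a) :
    (∀ x, x ∉ σ.support → (Equiv.swap a b * σ) x = x) ∧
    Disjoint {x | (Equiv.swap a b * σ).SameCycle a x}
             {x | (Equiv.swap a b * σ).SameCycle b x} ∧
    Set.ncard {x | (Equiv.swap a b * σ).SameCycle a x} = k ∧
    Set.ncard {x | (Equiv.swap a b * σ).SameCycle b x} = n - k ∧
    {x | (Equiv.swap a b * σ).SameCycle a x} ∪ {x | (Equiv.swap a b * σ).SameCycle b x}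
      = ↑σ.support := by
  have period_eq := (minimalPeriod_eq_card_support hσ ha).trans hn
  obtain ⟨apply_eq, cut⟩ := cut_case_general σ a k hk1 (by lia) b hb
  simp only [sameCycle_iff_mem_support hσ ha, period_eq] at apply_eq cut
  exact ⟨fun x hx ↦ (apply_eq x hx).trans (Equiv.Perm.notMem_support.1 hx), cut⟩
end

section
/- Define polynomials ξ̂_n ∈ ℚ[t] recursively by ξ̂_0 = t − 1 and ξ̂_n = t²(t−1)·(d/dt)ξ̂_{n−1} for n ≥ 1. Then for every n ≥ 0, ξ̂_n is a polynomial of degree 2n+1 with leading coefficient (2n−1)!! = (2n)!/(2^n n!). Moreover, for every n ≥ 1: the coefficient of t^{2n} in ξ̂_n equals −(2n+1)!!/3; the coefficient of t^{n+1} equals (−1)^n n!; the coefficient of t^k vanishes for all k ≤ n; and the coefficients a_n := coefficient of t^{n+2} in ξ̂_n satisfy a_0 = 0 and a_n = −((n+1)·a_{n−1} + (−1)^n n!) for n ≥ 1. -/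
/-!
On coefficients, `t²(t-1) d/dt` sends `(c_k)` to `(c'_k)` with `c'_{k+2} = k c_k - (k+1) c_{k+1}`.
From `ξ̂_1` on, each step therefore raises the degree by two and the order of vanishing at `0` by
one, and the extreme coefficients at either end satisfy first-order recursions, solved by double
factorials at the top and by factorials at the bottom.
-/

open Polynomial

/-- The polynomials `ξ̂_n(t)` from Hurwitz theory, defined by `ξ̂_0 = t - 1` and the
differential recursion `ξ̂_n = t²(t-1) (d/dt) ξ̂_{n-1}`. -/
noncomputable def xihat : ℕ → Polynomial ℚ
  | 0 => Polynomial.X - 1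
  | n + 1 => Polynomial.X ^ 2 * (Polynomial.X - 1) * Polynomial.derivative (xihat n)

open scoped Nat

section LambertDerivative

variable {R : Type*} [CommRing R]

/-- The derivation `t²(t-1) d/dt`, which is `-d/dw` in the Lambert coordinate `t = 1 + ξ_0(w)`.
It is kept as a plain function so that `xihat (n + 1)` is definitionally its value at `xihat n`. -/
noncomputable def lambertDerivative (p : R[X]) : R[X] :=
  X ^ 2 * (X - 1) * derivative p

theorem coeff_lambertDerivative_add_two (p : R[X]) (k : ℕ) :
    (lambertDerivative p).coeff (k + 2) = k * p.coeff k - (k + 1) * p.coeff (k + 1) := by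
  have coeff_X_mul_derivative : (X * derivative p).coeff k = k * p.coeff k := by
    cases k with
    | zero => simp
    | succ k => rw [coeff_X_mul, coeff_derivative, mul_comm, Nat.cast_succ]
  rw [lambertDerivative, mul_assoc, coeff_X_pow_mul, sub_mul, one_mul, coeff_sub,
    coeff_X_mul_derivative, coeff_derivative, mul_comm (p.coeff (k + 1))]

theorem natDegree_lambertDerivative_le (p : R[X]) :
    (lambertDerivative p).natDegree ≤ p.natDegree + 2 := by
  refine natDegree_le_iff_coeff_eq_zero.mpr fun N hN => ?_
  obtain ⟨k, rfl⟩ := Nat.exists_eq_add_of_le' (show 2 ≤ N by lia)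
  rw [coeff_lambertDerivative_add_two, coeff_eq_zero_of_natDegree_lt (show p.natDegree < k by lia),
    coeff_eq_zero_of_natDegree_lt (show p.natDegree < k + 1 by lia), mul_zero, mul_zero, sub_zero]

theorem X_sq_dvd_lambertDerivative (p : R[X]) : X ^ 2 ∣ lambertDerivative p :=
  (dvd_mul_right _ _).mul_right _

theorem X_pow_succ_dvd_lambertDerivative {p : R[X]} {m : ℕ} (h : X ^ m ∣ p) :
    X ^ (m + 1) ∣ lambertDerivative p := by
  have h_derivative : X ^ (m - 1) ∣ derivative p := pow_sub_one_dvd_derivative_of_pow_dvd h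
  calc (X : R[X]) ^ (m + 1) ∣ X ^ 2 * X ^ (m - 1) := by
        rw [← pow_add]; exact pow_dvd_pow X (by lia)
    _ ∣ lambertDerivative p := mul_dvd_mul (dvd_mul_right _ _) h_derivative

end LambertDerivative

theorem factorial_two_mul_div_eq_doubleFactorial {K : Type*} [Field K] [CharZero K] (n : ℕ) :
    ((2 * n)! : K) / (2 ^ n * n !) = ((2 * n - 1)‼ : ℕ) := by
  have h_factorial : (2 * n)! = (2 * n - 1)‼ * (2 ^ n * n !) := by
    rw [← Nat.doubleFactorial_two_mul]
    cases n with
    | zero => rfl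
    | succ n => exact (Nat.factorial_eq_mul_doubleFactorial (2 * n + 1)).trans (mul_comm _ _)
  have h_ne : (2 ^ n * n ! : K) ≠ 0 := by
    exact_mod_cast mul_ne_zero (pow_ne_zero n two_ne_zero) n.factorial_ne_zero
  rw [div_eq_iff h_ne, h_factorial]
  push_cast
  rfl

theorem coeff_xihat_succ_add_two (n k : ℕ) :
    (xihat (n + 1)).coeff (k + 2) = k * (xihat n).coeff k - (k + 1) * (xihat n).coeff (k + 1) :=
  coeff_lambertDerivative_add_two (xihat n) k

theorem natDegree_xihat_le (n : ℕ) : (xihat n).natDegree ≤ 2 * n + 1 := by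
  induction n with
  | zero => exact (natDegree_X_sub_C (1 : ℚ)).le
  | succ n ih => exact (natDegree_lambertDerivative_le (xihat n)).trans (by lia)

theorem coeff_xihat_two_mul_add_one (n : ℕ) :
    (xihat n).coeff (2 * n + 1) = ((2 * n - 1)‼ : ℕ) := by
  induction n with
  | zero => simp [xihat, coeff_one]
  | succ n ih =>
    have h_above : (xihat n).coeff (2 * n + 2) = 0 :=
      coeff_eq_zero_of_natDegree_lt ((natDegree_xihat_le n).trans_lt (Nat.lt_succ_self _))
    calc (xihat (n + 1)).coeff (2 * n + 1 + 2)
        = (2 * n + 1 : ℕ) * ((2 * n - 1)‼ : ℕ) := by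
          rw [coeff_xihat_succ_add_two, ih, h_above, mul_zero, sub_zero]
      _ = ((2 * n + 1)‼ : ℕ) := by rw [Nat.doubleFactorial_add_one, Nat.cast_mul]

theorem degree_xihat (n : ℕ) : (xihat n).degree = (2 * n + 1 : ℕ) := by
  refine degree_eq_of_le_of_coeff_ne_zero (natDegree_le_iff_degree_le.mp (natDegree_xihat_le n)) ?_
  rw [coeff_xihat_two_mul_add_one]
  exact_mod_cast (Nat.doubleFactorial_pos _).ne'

theorem leadingCoeff_xihat (n : ℕ) : (xihat n).leadingCoeff = ((2 * n - 1)‼ : ℕ) := by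
  rw [leadingCoeff, natDegree_eq_of_degree_eq_some (degree_xihat n), coeff_xihat_two_mul_add_one]

theorem coeff_xihat_two_mul {n : ℕ} (hn : 1 ≤ n) :
    (xihat n).coeff (2 * n) = -((2 * n + 1)‼ : ℕ) / 3 := by
  induction n, hn using Nat.le_induction with
  | base =>
    rw [coeff_xihat_succ_add_two 0 0, coeff_xihat_two_mul_add_one 0]
    norm_num [Nat.doubleFactorial]
  | succ n _ ih =>
    have h_top : (2 * n + 1)‼ = (2 * n + 1) * (2 * n - 1)‼ := Nat.doubleFactorial_add_one _
    have h_next : (2 * (n + 1) + 1)‼ = (2 * n + 3) * (2 * n + 1)‼ := rfl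
    calc (xihat (n + 1)).coeff (2 * n + 2)
        = (2 * n) * (-((2 * n + 1)‼ : ℕ) / 3) - (2 * n + 1) * ((2 * n - 1)‼ : ℕ) := by
          rw [coeff_xihat_succ_add_two, ih, coeff_xihat_two_mul_add_one]
          push_cast
          rfl
      _ = -((2 * (n + 1) + 1)‼ : ℕ) / 3 := by
          rw [h_next, h_top]
          push_cast
          ring

theorem X_pow_succ_dvd_xihat {n : ℕ} (hn : 1 ≤ n) : X ^ (n + 1) ∣ xihat n := by
  induction n, hn using Nat.le_induction with
  | base => exact X_sq_dvd_lambertDerivative (xihat 0)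
  | succ n _ ih => exact X_pow_succ_dvd_lambertDerivative ih

theorem coeff_xihat_eq_zero_of_le {n k : ℕ} (hn : 1 ≤ n) (hk : k ≤ n) : (xihat n).coeff k = 0 :=
  X_pow_dvd_iff.mp (X_pow_succ_dvd_xihat hn) k (Nat.lt_succ_of_le hk)

theorem coeff_xihat_add_one (n : ℕ) : (xihat n).coeff (n + 1) = (-1) ^ n * n ! := by
  induction n with
  | zero => simp [xihat, coeff_one]
  | succ n ih =>
    have h_below : (n : ℚ) * (xihat n).coeff n = 0 := by
      rcases n.eq_zero_or_pos with rfl | hn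
      · exact zero_mul _
      · rw [coeff_xihat_eq_zero_of_le hn le_rfl, mul_zero]
    rw [coeff_xihat_succ_add_two, h_below, ih, Nat.factorial_succ]
    push_cast
    ring

theorem coeff_xihat_succ_add_three (n : ℕ) :
    (xihat (n + 1)).coeff (n + 3)
      = -((n + 2) * (xihat n).coeff (n + 2) + (-1) ^ (n + 1) * (n + 1)!) := by
  rw [coeff_xihat_succ_add_two, coeff_xihat_add_one, Nat.factorial_succ]
  push_cast
  ring

/-- Polynomiality and coefficient structure of `ξ̂_n`: it has degree `2n+1` with leading
coefficient `(2n-1)!! = (2n)!/(2ⁿ n!)`; for `n ≥ 1` the coefficient of `t^{2n}` is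
`-(2n+1)!!/3` (where `(2n+1)!! = (2n+2)!/(2^{n+1}(n+1)!)`), the coefficient of `t^{n+1}`
is `(-1)ⁿ n!`, coefficients of `t^k` vanish for `k ≤ n`, and the coefficients
`a_n = [t^{n+2}] ξ̂_n` satisfy `a_0 = 0` and `a_n = -((n+1) a_{n-1} + (-1)ⁿ n!)`. -/
theorem xihat_properties :
    (∀ n : ℕ, (xihat n).degree = (2 * n + 1 : ℕ) ∧
      (xihat n).leadingCoeff = ((2 * n).factorial : ℚ) / (2 ^ n * n.factorial)) ∧
    (∀ n : ℕ, 1 ≤ n →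
      (xihat n).coeff (2 * n)
        = -(((2 * n + 2).factorial : ℚ) / (2 ^ (n + 1) * (n + 1).factorial)) / 3 ∧
      (xihat n).coeff (n + 1) = (-1) ^ n * n.factorial ∧
      (∀ k ≤ n, (xihat n).coeff k = 0)) ∧
    ((xihat 0).coeff 2 = 0 ∧
      ∀ n : ℕ, 1 ≤ n → (xihat n).coeff (n + 2)
        = -(((n : ℚ) + 1) * (xihat (n - 1)).coeff ((n - 1) + 2) + (-1) ^ n * n.factorial)) := by
  refine ⟨fun n => ⟨degree_xihat n, ?_⟩, fun n hn => ⟨?_, coeff_xihat_add_one n,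
    fun _ => coeff_xihat_eq_zero_of_le hn⟩, ?_, fun n hn => ?_⟩
  · rw [leadingCoeff_xihat, factorial_two_mul_div_eq_doubleFactorial]
  · rw [coeff_xihat_two_mul hn]
    exact congrArg (-· / 3) (factorial_two_mul_div_eq_doubleFactorial (n + 1)).symm
  · exact coeff_eq_zero_of_natDegree_lt ((natDegree_xihat_le 0).trans_lt one_lt_two)
  · obtain ⟨m, rfl⟩ := Nat.exists_eq_add_of_le' hn
    rw [coeff_xihat_succ_add_three, Nat.add_sub_cancel]
    push_cast
    ring
end

section
/- For every integer n ≥ 2, the identity (1/2) ∑_{a=1}^{n−1} (a^{a−1}/a!)·((n−a)^{n−a−1}/(n−a)!) = (n−1)·n^{n−2}/n! holds in ℚ. -/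
/-!
The coefficient of `X ^ j` in `∑ C(n, k) k ^ (k - 1) (X - k) ^ (n - k)`, summed over `1 ≤ k ≤ n`,
is `C(n, j)` times the value at `0` of the `(n - j)`-th forward difference of
`x ↦ x ^ (n - j - 1)`, without its `k = 0` term. The difference vanishes because the degree is too
small, and the omitted term is nonzero only for `j = n - 1`, so the sum equals `n X ^ (n - 1)`:
this is the linear coefficient of Abel's binomial identity.

At `X = n`, once the term `k = n` is dropped, the left-hand side counts the pairs of rooted trees
on complementary nonempty subsets of an `n`-set with a further marked node in the second tree.
Adding the mirror image under `k ↦ n - k`, which marks a node in the first tree instead, gives `n`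
times the number of unmarked pairs.
-/

open Finset Polynomial

theorem choose_mul_choose_sub_comm (n j k : ℕ) :
    n.choose k * (n - k).choose j = n.choose j * (n - j).choose k := by
  calc n.choose k * (n - k).choose j
    _ = n.choose (j + k) * (j + k).choose k := by
      rw [Nat.choose_mul (Nat.le_add_left k j), Nat.add_sub_cancel]
    _ = n.choose (j + k) * (j + k).choose j := by rw [Nat.choose_symm_add]
    _ = n.choose j * (n - j).choose k := by
      rw [Nat.choose_mul (Nat.le_add_right j k), Nat.add_sub_cancel_left]

theorem nsmul_sum_Ico_eq_two_nsmul_sum_of_reflect {M : Type*} [AddCommMonoid M] {n : ℕ} {g : ℕ → M}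
    (hg : ∀ k ∈ Ico 1 n, g (n - k) = g k) :
    n • ∑ k ∈ Ico 1 n, g k = 2 • ∑ k ∈ Ico 1 n, (n - k) • g k := by
  have reflect : ∑ k ∈ Ico 1 n, k • g k = ∑ k ∈ Ico 1 n, (n - k) • g k := by
    have := sum_Ico_reflect (fun k ↦ k • g k) 1 n.le_succ
    rw [Nat.add_sub_cancel_left, Nat.add_sub_cancel] at this
    rw [← this]
    exact sum_congr rfl fun k hk ↦ by rw [hg k hk]
  calc n • ∑ k ∈ Ico 1 n, g k
    _ = ∑ k ∈ Ico 1 n, (k • g k + (n - k) • g k) := by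
      rw [smul_sum]
      refine sum_congr rfl fun k hk ↦ ?_
      rw [← add_nsmul, Nat.add_sub_cancel' (mem_Ico.mp hk).2.le]
    _ = 2 • ∑ k ∈ Ico 1 n, (n - k) • g k := by rw [sum_add_distrib, reflect, two_nsmul]

section CommRing

variable {R : Type*} [CommRing R]

theorem sum_range_neg_one_pow_mul_choose_mul_pow_eq_zero {j m : ℕ} (h : j < m) :
    ∑ k ∈ range (m + 1), (-1 : R) ^ (m - k) * m.choose k * (k : R) ^ j = 0 := by
  have := fwdDiff_iter_eq_sum_shift (1 : R) (· ^ j) m 0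
  rw [fwdDiff_iter_pow_eq_zero_of_lt h] at this
  simpa using this.symm

theorem sum_Icc_neg_one_pow_mul_choose_mul_pow_sub_one (m : ℕ) :
    ∑ k ∈ Icc 1 m, (-1 : R) ^ (m - k) * m.choose k * (k : R) ^ (m - 1) =
      if m = 1 then 1 else 0 := by
  obtain rfl | hm | hm : m = 0 ∨ m = 1 ∨ 1 < m := by lia
  · simp
  · simp [hm]
  · have h := sum_range_neg_one_pow_mul_choose_mul_pow_eq_zero (R := R)
      (Nat.sub_lt_self one_pos hm.le)
    rw [range_eq_Ico, sum_eq_sum_Ico_succ_bot m.succ_pos, Nat.cast_zero,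
      zero_pow (Nat.sub_pos_of_lt hm).ne', mul_zero, zero_add] at h
    rw [if_neg hm.ne']
    exact h

theorem coeff_C_choose_mul_pow_mul_X_sub_pow {n k : ℕ} (hk : k ∈ Icc 1 n) (j : ℕ) :
    (C (n.choose k * (k : R) ^ (k - 1)) * (X - C (k : R)) ^ (n - k)).coeff j =
      n.choose j * ((-1) ^ (n - j - k) * (n - j).choose k * (k : R) ^ (n - j - 1)) := by
  obtain ⟨hk1, hkn⟩ := mem_Icc.mp hk
  rw [sub_eq_add_neg, ← C_neg, coeff_C_mul, coeff_X_add_C_pow]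
  obtain hjk | hjk := le_or_gt (j + k) n
  · have hchoose : (n.choose k * (n - k).choose j : R) = n.choose j * (n - j).choose k := by
      rw [← Nat.cast_mul, choose_mul_choose_sub_comm, Nat.cast_mul]
    have hpow : (k : R) ^ (n - j - 1) = (k : R) ^ (k - 1) * (k : R) ^ (n - j - k) := by
      rw [← pow_add]
      congr 1
      lia
    rw [neg_pow, hpow, Nat.sub_right_comm n k j]
    linear_combination (k : R) ^ (k - 1) * (-1) ^ (n - j - k) * (k : R) ^ (n - j - k) * hchoose
  · rw [Nat.choose_eq_zero_of_lt (show n - k < j by lia),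
      Nat.choose_eq_zero_of_lt (show n - j < k by lia)]
    simp only [Nat.cast_zero, mul_zero, zero_mul]

theorem sum_Icc_choose_mul_pow_mul_X_sub_pow (n : ℕ) :
    ∑ k ∈ Icc 1 n, C (n.choose k * (k : R) ^ (k - 1)) * (X - C (k : R)) ^ (n - k) =
      C (n : R) * X ^ (n - 1) := by
  ext j
  have shrink : Icc 1 (n - j) ⊆ Icc 1 n := Icc_subset_Icc_right (Nat.sub_le n j)
  have choose_eq_zero : ∀ k ∈ Icc 1 n, k ∉ Icc 1 (n - j) → (n - j).choose k = 0 := by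
    intro k hk hk'
    rw [mem_Icc] at hk hk'
    exact Nat.choose_eq_zero_of_lt (by lia)
  calc (∑ k ∈ Icc 1 n, C (n.choose k * (k : R) ^ (k - 1)) * (X - C (k : R)) ^ (n - k)).coeff j
    _ = n.choose j *
        ∑ k ∈ Icc 1 n, (-1) ^ (n - j - k) * (n - j).choose k * (k : R) ^ (n - j - 1) := by
      rw [finsetSum_coeff, mul_sum]
      exact sum_congr rfl fun k hk ↦ coeff_C_choose_mul_pow_mul_X_sub_pow hk j
    _ = n.choose j * if n - j = 1 then 1 else 0 := by
      rw [← sum_Icc_neg_one_pow_mul_choose_mul_pow_sub_one, ← sum_subset shrink]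
      intro k hk hk'
      rw [choose_eq_zero k hk hk', Nat.cast_zero, mul_zero, zero_mul]
    _ = (C (n : R) * X ^ (n - 1)).coeff j := by
      rw [coeff_C_mul_X_pow]
      obtain rfl | hn := n.eq_zero_or_pos
      · simp
      obtain rfl | hj := eq_or_ne j (n - 1)
      · simp [Nat.sub_sub_self hn, Nat.choose_symm hn]
      · simp [hj, show n - j ≠ 1 by lia]

end CommRing

theorem sum_Ico_choose_mul_pow_mul_pow (n : ℕ) :
    ∑ k ∈ Ico 1 n, n.choose k * k ^ (k - 1) * (n - k) ^ (n - k) = (n - 1) * n ^ (n - 1) := by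
  obtain rfl | hn := n.eq_zero_or_pos
  · simp
  have abel : ∑ k ∈ Icc 1 n, n.choose k * k ^ (k - 1) * (n - k) ^ (n - k) = n * n ^ (n - 1) := by
    zify
    calc ∑ k ∈ Icc 1 n, (n.choose k * k ^ (k - 1) * (n - k : ℕ) ^ (n - k) : ℤ)
      _ = ∑ k ∈ Icc 1 n, (n.choose k * k ^ (k - 1) * (n - k) ^ (n - k) : ℤ) :=
        sum_congr rfl fun k hk ↦ by rw [Nat.cast_sub (mem_Icc.mp hk).2]
      _ = n * n ^ (n - 1) := by
        simpa [eval_finsetSum] using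
          congrArg (eval (n : ℤ)) (sum_Icc_choose_mul_pow_mul_X_sub_pow n)
  rw [← Ico_add_one_right_eq_Icc, sum_Ico_succ_top hn, Nat.choose_self, Nat.sub_self, pow_zero,
    mul_one, one_mul] at abel
  rw [Nat.sub_mul, one_mul]
  exact Nat.eq_sub_of_add_eq abel

theorem sum_Ico_choose_mul_pow_mul_pow_sub_one (n : ℕ) :
    ∑ k ∈ Ico 1 n, n.choose k * (k ^ (k - 1) * (n - k) ^ (n - k - 1)) =
      2 * ((n - 1) * n ^ (n - 2)) := by
  obtain hn | hn := lt_or_ge n 2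
  · interval_cases n <;> simp
  refine Nat.eq_of_mul_eq_mul_left (show 0 < n by lia) ?_
  have symm : ∀ k ∈ Ico 1 n,
      n.choose (n - k) * ((n - k) ^ (n - k - 1) * (n - (n - k)) ^ (n - (n - k) - 1)) =
        n.choose k * (k ^ (k - 1) * (n - k) ^ (n - k - 1)) := by
    intro k hk
    have hkn := (mem_Ico.mp hk).2.le
    rw [Nat.choose_symm hkn, Nat.sub_sub_self hkn, mul_comm ((n - k) ^ _)]
  calc n * ∑ k ∈ Ico 1 n, n.choose k * (k ^ (k - 1) * (n - k) ^ (n - k - 1))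
    _ = 2 * ∑ k ∈ Ico 1 n, (n - k) * (n.choose k * (k ^ (k - 1) * (n - k) ^ (n - k - 1))) :=
      nsmul_sum_Ico_eq_two_nsmul_sum_of_reflect symm
    _ = 2 * ∑ k ∈ Ico 1 n, n.choose k * k ^ (k - 1) * (n - k) ^ (n - k) := by
      congr 1
      refine sum_congr rfl fun k hk ↦ ?_
      rw [← mul_pow_sub_one (Nat.sub_ne_zero_of_lt (mem_Ico.mp hk).2) (n - k)]
      ring
    _ = n * (2 * ((n - 1) * n ^ (n - 2))) := by
      rw [sum_Ico_choose_mul_pow_mul_pow, ← mul_pow_sub_one (show n - 1 ≠ 0 by lia) n, Nat.sub_sub]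
      ring

/-- The tree-counting identity behind the Lambert curve: joining two rooted trees at
their roots gives a based tree, whence
`(1/2) ∑_{a=1}^{n-1} (a^{a-1}/a!)·((n-a)^{n-a-1}/(n-a)!) = (n-1)·n^{n-2}/n!`. -/
theorem rooted_tree_join_identity (n : ℕ) (hn : 2 ≤ n) :
    (1 / 2 : ℚ) * ∑ a ∈ Finset.Ico 1 n,
        ((a : ℚ) ^ (a - 1) / a.factorial) *
        (((n - a : ℕ) : ℚ) ^ (n - a - 1) / ((n - a).factorial : ℚ))
      = ((n : ℚ) - 1) * (n : ℚ) ^ (n - 2) / (n.factorial : ℚ) := by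
  have hterm : ∀ a ∈ Ico 1 n,
      (a : ℚ) ^ (a - 1) / a.factorial *
          (((n - a : ℕ) : ℚ) ^ (n - a - 1) / (n - a).factorial) =
        (n.choose a * (a ^ (a - 1) * (n - a) ^ (n - a - 1)) : ℕ) / n.factorial := by
    intro a ha
    push_cast
    rw [Nat.cast_choose ℚ (mem_Ico.mp ha).2.le]
    field_simp
  rw [sum_congr rfl hterm, ← sum_div, ← Nat.cast_sum, sum_Ico_choose_mul_pow_mul_pow_sub_one]
  push_cast [Nat.cast_sub (one_le_two.trans hn)]
  ring
end

section
/- Define A_n = ∑_{ℓ=0}^n (binom(n,ℓ))² (binom(n+ℓ,ℓ))² for n ≥ 0. Then A_0 = 1, A_1 = 5, and for every integer n ≥ 1, (n+1)³·A_{n+1} + n³·A_{n−1} = (34n³ + 51n² + 27n + 5)·A_n. -/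
/-- The Apéry sequence `A_n = ∑_{ℓ=0}^n binom(n,ℓ)² binom(n+ℓ,ℓ)²`. -/
def aperyA (n : ℕ) : ℕ :=
  ∑ ℓ ∈ Finset.range (n + 1), (n.choose ℓ) ^ 2 * ((n + ℓ).choose ℓ) ^ 2

/-!
Write `A_n = ∑ₖ T(n,k)²` with `T(n,k) = binom(n,k) binom(n+k,k)`. Each of `T(n+1,k+1)`, `T(n,k+1)`
and `T(n-1,k+1)` is an explicit rational multiple of `T(n,k)`. Hence Apéry's difference operator,
applied to `n ↦ T(n,k)²`, can be compared with Zagier's certificate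
`B(n,k) = 4(2n+1)(k(2k+1) - (2n+1)²) T(n,k)²`: it gives `B(n,k) - B(n,k-1)`, where `B(n,-1) = 0`.
Summing over `k` telescopes, and `B(n,k)` vanishes for `k > n`.
-/

section ChooseCast

variable {R : Type*} [Ring R]

theorem cast_choose_succ_right_eq (n k : ℕ) :
    (n.choose (k + 1) : R) * (k + 1) = n.choose k * (n - k) := by
  rcases le_or_gt k n with hkn | hnk
  · rw [← Nat.cast_sub hkn]
    exact_mod_cast congrArg (Nat.cast (R := R)) (Nat.choose_succ_right_eq n k)
  · simp [Nat.choose_eq_zero_of_lt hnk, Nat.choose_eq_zero_of_lt (hnk.trans k.lt_succ_self)]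

theorem cast_choose_mul_succ_eq (n k : ℕ) :
    (n.choose k : R) * (n + 1) = (n + 1).choose k * (n + 1 - k) := by
  rcases le_or_gt k (n + 1) with hkn | hnk
  · rw [← Nat.cast_add_one, ← Nat.cast_sub hkn]
    exact_mod_cast congrArg (Nat.cast (R := R)) (Nat.choose_mul_succ_eq n k)
  · simp [Nat.choose_eq_zero_of_lt hnk, Nat.choose_eq_zero_of_lt (n.lt_succ_self.trans hnk)]

end ChooseCast

/-- The number `binom(n,k) binom(n+k,k)`, whose square is the summand of `aperyA n`. -/
def aperyBinom (n k : ℕ) : ℕ := n.choose k * (n + k).choose k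

@[simp]
theorem aperyBinom_zero_right (n : ℕ) : aperyBinom n 0 = 1 := by simp [aperyBinom]

theorem aperyBinom_eq_zero_of_lt {n k : ℕ} (h : n < k) : aperyBinom n k = 0 := by
  simp [aperyBinom, Nat.choose_eq_zero_of_lt h]

theorem aperyA_eq_sum_range {n N : ℕ} (h : n < N) :
    aperyA n = ∑ k ∈ Finset.range N, aperyBinom n k ^ 2 := by
  simp only [aperyA, ← mul_pow]
  refine Finset.sum_subset (Finset.range_mono h) fun k _ hk => ?_
  have hnk : n < k := by simpa using hk
  simp [Nat.choose_eq_zero_of_lt hnk]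

theorem sq_mul_aperyBinom_succ_succ (n k : ℕ) :
    (k + 1) ^ 2 * aperyBinom (n + 1) (k + 1) = (n + k + 1) * (n + k + 2) * aperyBinom n k := by
  have left := Nat.add_one_mul_choose_eq n k
  have right := Nat.add_one_mul_choose_eq (n + k + 1) k
  have lower := Nat.choose_mul_succ_eq (n + k) k
  rw [show n + k + 1 - k = n + 1 by omega] at lower
  unfold aperyBinom
  rw [show n + 1 + (k + 1) = n + k + 1 + 1 by ring]
  calc (k + 1) ^ 2 * ((n + 1).choose (k + 1) * (n + k + 1 + 1).choose (k + 1))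
      = ((n + 1).choose (k + 1) * (k + 1)) * ((n + k + 1 + 1).choose (k + 1) * (k + 1)) := by ring
    _ = ((n + 1) * n.choose k) * ((n + k + 1 + 1) * (n + k + 1).choose k) := by rw [left, right]
    _ = (n + k + 2) * n.choose k * ((n + k + 1).choose k * (n + 1)) := by ring
    _ = (n + k + 1) * (n + k + 2) * (n.choose k * (n + k).choose k) := by rw [← lower]; ring

section Contiguous

variable {R : Type*} [CommRing R]

theorem sq_mul_aperyBinom_succ_right (n k : ℕ) :
    (k + 1 : R) ^ 2 * aperyBinom n (k + 1) = (n + k + 1) * (n - k) * aperyBinom n k := by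
  have left := cast_choose_succ_right_eq (R := R) n k
  have right := congrArg (Nat.cast (R := R)) (Nat.add_one_mul_choose_eq (n + k) k)
  push_cast at right
  simp only [aperyBinom, ← add_assoc, Nat.cast_mul]
  calc (k + 1 : R) ^ 2 * (n.choose (k + 1) * (n + k + 1).choose (k + 1))
      = (n.choose (k + 1) * (k + 1)) * ((n + k + 1).choose (k + 1) * (k + 1)) := by ring
    _ = (n.choose k * (n - k)) * ((n + k + 1) * (n + k).choose k) := by rw [left, ← right]
    _ = (n + k + 1) * (n - k) * (n.choose k * (n + k).choose k) := by ring

theorem sub_mul_aperyBinom_succ_left (n k : ℕ) :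
    (n + 1 - k : R) * aperyBinom (n + 1) k = (n + k + 1) * aperyBinom n k := by
  have left := cast_choose_mul_succ_eq (R := R) n k
  have right := cast_choose_mul_succ_eq (R := R) (n + k) k
  push_cast at right
  simp only [aperyBinom, add_right_comm n 1 k, Nat.cast_mul]
  calc (n + 1 - k : R) * ((n + 1).choose k * (n + k + 1).choose k)
      = ((n + 1).choose k * (n + 1 - k)) * (n + k + 1).choose k := by ring
    _ = n.choose k * ((n + k + 1).choose k * (n + k + 1 - k)) := by rw [← left]; ring
    _ = (n + k + 1) * (n.choose k * (n + k).choose k) := by rw [← right]; ring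

theorem sq_mul_aperyBinom_succ_right_eq_succ_left (n k : ℕ) :
    (k + 1 : R) ^ 2 * aperyBinom n (k + 1) = (n + 1 - k) * (n - k) * aperyBinom (n + 1) k := by
  linear_combination sq_mul_aperyBinom_succ_right (R := R) n k -
    (n - k : R) * sub_mul_aperyBinom_succ_left (R := R) n k

/-- Apéry's difference operator on sequences. It is centred at `n + 1`, i.e. the paper's recursion
at `n` is the vanishing of `aperyOperator u (n - 1)`; this avoids the truncated index `n - 1`. -/
def aperyOperator : (ℕ → R) →ₗ[R] (ℕ → R) where
  toFun u n := (n + 2) ^ 3 * u (n + 2)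
    - (34 * (n + 1) ^ 3 + 51 * (n + 1) ^ 2 + 27 * (n + 1) + 5) * u (n + 1) + (n + 1) ^ 3 * u n
  map_add' u v := by ext n; simp only [Pi.add_apply]; ring
  map_smul' c u := by ext n; simp only [Pi.smul_apply, smul_eq_mul, RingHom.id_apply]; ring

theorem aperyOperator_apply (u : ℕ → R) (n : ℕ) :
    aperyOperator u n = (n + 2) ^ 3 * u (n + 2)
      - (34 * (n + 1) ^ 3 + 51 * (n + 1) ^ 2 + 27 * (n + 1) + 5) * u (n + 1)
      + (n + 1) ^ 3 * u n :=
  rfl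

end Contiguous

/-- The certificate `B(n,k)` of the creative telescoping for `∑ₖ binom(n,k)² binom(n+k,k)²`. -/
def aperyCertificate (n k : ℕ) : ℤ :=
  4 * (2 * n + 1) * (k * (2 * k + 1) - (2 * n + 1) ^ 2) * aperyBinom n k ^ 2

theorem aperyCertificate_eq_zero_of_lt {n k : ℕ} (h : n < k) : aperyCertificate n k = 0 := by
  simp [aperyCertificate, aperyBinom_eq_zero_of_lt h]

theorem aperyOperator_aperyBinom_sq_zero (n : ℕ) :
    aperyOperator (fun m => (aperyBinom m 0 : ℤ) ^ 2) n = aperyCertificate (n + 1) 0 := by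
  simp only [aperyOperator_apply, aperyCertificate, aperyBinom_zero_right]
  push_cast
  ring

theorem aperyOperator_aperyBinom_sq_succ (n k : ℕ) :
    aperyOperator (fun m => (aperyBinom m (k + 1) : ℤ) ^ 2) n =
      aperyCertificate (n + 1) (k + 1) - aperyCertificate (n + 1) k := by
  have upper : (k + 1 : ℤ) ^ 2 * aperyBinom (n + 2) (k + 1) =
      (n + k + 2) * (n + k + 3) * aperyBinom (n + 1) k := by
    have shifted := congrArg (Nat.cast (R := ℤ)) (sq_mul_aperyBinom_succ_succ (n + 1) k)
    push_cast at shifted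
    linear_combination shifted
  have middle : (k + 1 : ℤ) ^ 2 * aperyBinom (n + 1) (k + 1) =
      (n + k + 2) * (n + 1 - k) * aperyBinom (n + 1) k := by
    have shifted := sq_mul_aperyBinom_succ_right (R := ℤ) (n + 1) k
    push_cast at shifted
    linear_combination shifted
  have lower := sq_mul_aperyBinom_succ_right_eq_succ_left (R := ℤ) n k
  have scale_ne_zero : ((k + 1 : ℤ) ^ 2) ^ 2 ≠ 0 := by positivity
  apply mul_left_cancel₀ scale_ne_zero
  simp only [aperyOperator_apply, aperyCertificate]
  push_cast
  -- The coefficient of `aperyBinom (n + 1) (k + 1) ^ 2` also collects the term `B(n + 1, k + 1)`.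
  linear_combination (n + 2 : ℤ) ^ 3 * congrArg (· ^ 2) upper
    - (34 * (n + 1 : ℤ) ^ 3 + 51 * (n + 1) ^ 2 + 27 * (n + 1) + 5
        + 4 * (2 * n + 3) * ((k + 1) * (2 * k + 3) - (2 * n + 3) ^ 2)) * congrArg (· ^ 2) middle
    + (n + 1 : ℤ) ^ 3 * congrArg (· ^ 2) lower

theorem sum_range_aperyOperator_aperyBinom_sq (n K : ℕ) :
    ∑ k ∈ Finset.range (K + 1), aperyOperator (fun m => (aperyBinom m k : ℤ) ^ 2) n =
      aperyCertificate (n + 1) K := by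
  simp only [Finset.sum_range_succ', aperyOperator_aperyBinom_sq_succ,
    aperyOperator_aperyBinom_sq_zero, Finset.sum_range_sub, sub_add_cancel]

theorem aperyOperator_aperyA (n : ℕ) : aperyOperator (fun m => (aperyA m : ℤ)) n = 0 :=
  calc aperyOperator (fun m => (aperyA m : ℤ)) n
      = aperyOperator (∑ k ∈ Finset.range (n + 3), fun m => (aperyBinom m k : ℤ) ^ 2) n := by
        simp only [aperyOperator_apply, Finset.sum_apply,
          aperyA_eq_sum_range (show n < n + 3 by omega),
          aperyA_eq_sum_range (show n + 1 < n + 3 by omega),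
          aperyA_eq_sum_range (show n + 2 < n + 3 by omega), Nat.cast_sum, Nat.cast_pow]
    _ = ∑ k ∈ Finset.range (n + 3), aperyOperator (fun m => (aperyBinom m k : ℤ) ^ 2) n := by
        rw [map_sum, Finset.sum_apply]
    _ = aperyCertificate (n + 1) (n + 2) := sum_range_aperyOperator_aperyBinom_sq n (n + 2)
    _ = 0 := aperyCertificate_eq_zero_of_lt (by omega)

/-- Apéry's recursion for the sequence `A_n`: `A_0 = 1`, `A_1 = 5`, and
`(n+1)³ A_{n+1} - (34n³+51n²+27n+5) A_n + n³ A_{n-1} = 0` for `n ≥ 1`. -/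
theorem aperyA_recursion :
    aperyA 0 = 1 ∧ aperyA 1 = 5 ∧
    ∀ n : ℕ, 1 ≤ n →
      (n + 1) ^ 3 * aperyA (n + 1) + n ^ 3 * aperyA (n - 1)
        = (34 * n ^ 3 + 51 * n ^ 2 + 27 * n + 5) * aperyA n := by
  refine ⟨by decide, by decide, fun n hn => ?_⟩
  obtain ⟨m, rfl⟩ := Nat.exists_eq_add_of_le' hn
  have recursion := aperyOperator_aperyA m
  rw [aperyOperator_apply] at recursion
  zify
  push_cast [Nat.add_sub_cancel]
  linear_combination recursion
end

section
/- The value ζ(3) = ∑_{m=1}^∞ 1/m³ admits the integral representation ζ(3) = (1/2) ∫_0^1 ∫_0^1 ∫_0^1 dx dy dz / (1 − z + xyz), where the triple integral over the open unit cube converges. -/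
open MeasureTheory

/-!
Integrating out `z` turns the integrand into `-log (xy) / (1 - xy)`, which depends on `x` and `y`
only through `t = xy`. The image of Lebesgue measure on the unit square under `(x, y) ↦ xy` has
density `-log t` on `(0, 1)`, so the triple integral equals `∫₀¹ (log t)² / (1 - t) dt`. Expanding
`1 / (1 - t)` as a geometric series and substituting `t = exp (-u)` gives `∑ Γ(3) / (n + 1)³`.
All integrands are nonnegative, so the computation is carried out with values in `[0, ∞]`, where
exchanging sums and integrals needs no integrability; convergence is then read off the result.
-/

open Set Real
open scoped ENNReal

lemma setLIntegral_Ioo_ofReal_eq_ofReal_intervalIntegral {f : ℝ → ℝ} {a b : ℝ} (hab : a ≤ b)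
    (hf : IntervalIntegrable f volume a b) (hf₀ : ∀ x ∈ Ioo a b, 0 ≤ f x) :
    ∫⁻ x in Ioo a b, ENNReal.ofReal (f x) = ENNReal.ofReal (∫ x in a..b, f x) := by
  rw [intervalIntegral.integral_of_le hab, integral_Ioc_eq_integral_Ioo]
  exact (ofReal_integral_eq_lintegral_ofReal
    ((intervalIntegrable_iff_integrableOn_Ioo_of_le hab).1 hf)
    (ae_restrict_of_forall_mem measurableSet_Ioo hf₀)).symm

lemma setLIntegral_Ioo_comp_mul_left (f : ℝ → ℝ≥0∞) {c : ℝ} (hc : 0 < c) (a b : ℝ) :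
    ∫⁻ y in Ioo a b, f (c * y) = ENNReal.ofReal c⁻¹ * ∫⁻ t in Ioo (c * a) (c * b), f t := by
  rw [← image_mul_left_Ioo hc, lintegral_image_eq_lintegral_abs_deriv_mul measurableSet_Ioo
    (fun y _ => (hasDerivAt_const_mul c).hasDerivWithinAt) (mul_right_injective₀ hc.ne').injOn,
    lintegral_const_mul' _ _ ENNReal.ofReal_ne_top, ← mul_assoc, abs_of_pos hc,
    ← ENNReal.ofReal_mul (inv_nonneg.2 hc.le), inv_mul_cancel₀ hc.ne', ENNReal.ofReal_one, one_mul]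

lemma setLIntegral_Ioo_zero_one_eq_lintegral_exp_neg (f : ℝ → ℝ≥0∞) :
    ∫⁻ t in Ioo 0 1, f t = ∫⁻ u in Ioi 0, ENNReal.ofReal (exp (-u)) * f (exp (-u)) := by
  have image_exp_neg : (fun u => exp (-u)) '' Ioi 0 = Ioo 0 1 := by
    rw [← image_image exp Neg.neg, image_neg_Ioi, image_exp_Iio, neg_zero, exp_zero]
  rw [← image_exp_neg, lintegral_image_eq_lintegral_abs_deriv_mul measurableSet_Ioi
    (fun u _ => (hasDerivAt_neg u).exp.hasDerivWithinAt)
    (exp_injective.comp neg_injective).injOn]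
  simp only [mul_neg, mul_one, abs_neg, abs_exp]

lemma setLIntegral_Ioo_inv {a b : ℝ} (ha : 0 < a) (hab : a ≤ b) :
    ∫⁻ x in Ioo a b, ENNReal.ofReal x⁻¹ = ENNReal.ofReal (log (b / a)) := by
  have zero_notMem : (0 : ℝ) ∉ uIcc a b := notMem_uIcc_of_lt ha (ha.trans_le hab)
  rw [setLIntegral_Ioo_ofReal_eq_ofReal_intervalIntegral hab
    (intervalIntegrable_inv_iff.2 (.inr zero_notMem))
    (fun x hx => inv_nonneg.2 (ha.trans hx.1).le), integral_inv zero_notMem]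

lemma setLIntegral_setLIntegral_comp_mul {f : ℝ → ℝ≥0∞} (hf : Measurable f) :
    ∫⁻ x in Ioo 0 1, ∫⁻ y in Ioo 0 1, f (x * y) =
      ∫⁻ t in Ioo 0 1, ENNReal.ofReal (-log t) * f t := by
  let k : ℝ × ℝ → ℝ≥0∞ :=
    {p | p.2 < p.1}.indicator fun p => ENNReal.ofReal p.1⁻¹ * f p.2
  have measurable_k : Measurable k :=
    Measurable.indicator (by fun_prop) (measurableSet_lt measurable_snd measurable_fst)
  have inner_x (x : ℝ) (hx : x ∈ Ioo 0 1) :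
      ∫⁻ y in Ioo 0 1, f (x * y) = ∫⁻ t in Ioo 0 1, k (x, t) := by
    have k_eq : (fun t => k (x, t)) = (Iio x).indicator fun t => ENNReal.ofReal x⁻¹ * f t := rfl
    rw [setLIntegral_Ioo_comp_mul_left f hx.1, k_eq, setLIntegral_indicator measurableSet_Iio,
      lintegral_const_mul _ hf, Iio_inter_Ioo, min_eq_left hx.2.le, mul_zero, mul_one]
  have inner_t (t : ℝ) (ht : t ∈ Ioo 0 1) :
      ∫⁻ x in Ioo 0 1, k (x, t) = ENNReal.ofReal (-log t) * f t := by
    have k_eq : (fun x => k (x, t)) = (Ioi t).indicator fun x => ENNReal.ofReal x⁻¹ * f t := rfl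
    rw [k_eq, setLIntegral_indicator measurableSet_Ioi, lintegral_mul_const _ (by fun_prop),
      Ioi_inter_Ioo, max_eq_left ht.1.le, setLIntegral_Ioo_inv ht.1 ht.2.le, one_div, log_inv]
  rw [setLIntegral_congr_fun measurableSet_Ioo inner_x,
    lintegral_lintegral_swap (f := fun x t => k (x, t)) measurable_k.aemeasurable,
    setLIntegral_congr_fun measurableSet_Ioo inner_t]

section LogarithmicMoments

variable {a r : ℝ}

lemma lintegral_rpow_mul_exp_neg_mul_Ioi (ha : 0 < a) (hr : 0 < r) :
    ∫⁻ u in Ioi 0, ENNReal.ofReal (u ^ (a - 1) * exp (-(r * u))) =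
      ENNReal.ofReal (Gamma a / r ^ a) := by
  have integral_eq := integral_rpow_mul_exp_neg_mul_Ioi ha hr
  have integrable : IntegrableOn (fun u => u ^ (a - 1) * exp (-(r * u))) (Ioi 0) :=
    .of_integral_ne_zero (by rw [integral_eq]; have := Gamma_pos_of_pos ha; positivity)
  rw [← ofReal_integral_eq_lintegral_ofReal integrable
    (ae_restrict_of_forall_mem measurableSet_Ioi fun u hu =>
      mul_nonneg (rpow_nonneg (le_of_lt hu) _) (exp_nonneg _)),
    integral_eq, one_div, inv_rpow hr.le, inv_mul_eq_div]

lemma setLIntegral_neg_log_rpow_mul_rpow (ha : 0 < a) (hr : 0 < r) :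
    ∫⁻ t in Ioo 0 1, ENNReal.ofReal ((-log t) ^ (a - 1) * t ^ (r - 1)) =
      ENNReal.ofReal (Gamma a / r ^ a) := by
  rw [setLIntegral_Ioo_zero_one_eq_lintegral_exp_neg, ← lintegral_rpow_mul_exp_neg_mul_Ioi ha hr]
  refine lintegral_congr fun u => ?_
  rw [← ENNReal.ofReal_mul (exp_nonneg _), log_exp, neg_neg, mul_left_comm, ← exp_mul, ← exp_add]
  ring_nf

lemma setLIntegral_neg_log_rpow_div_one_sub (ha : 0 < a) :
    ∫⁻ t in Ioo 0 1, ENNReal.ofReal ((-log t) ^ (a - 1) / (1 - t)) =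
      ∑' n : ℕ, ENNReal.ofReal (Gamma a / ((n : ℝ) + 1) ^ a) := by
  have geometric (t : ℝ) (ht : t ∈ Ioo 0 1) :
      ENNReal.ofReal ((-log t) ^ (a - 1) / (1 - t)) =
        ∑' n : ℕ, ENNReal.ofReal ((-log t) ^ (a - 1) * t ^ ((n + 1 : ℝ) - 1)) := by
    have term_nonneg (n : ℕ) : 0 ≤ (-log t) ^ (a - 1) * t ^ n :=
      mul_nonneg (rpow_nonneg (neg_nonneg.2 (log_nonpos ht.1.le ht.2.le)) _) (pow_nonneg ht.1.le n)
    simp only [add_sub_cancel_right, rpow_natCast]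
    rw [← ENNReal.ofReal_tsum_of_nonneg term_nonneg
      ((summable_geometric_of_lt_one ht.1.le ht.2).mul_left _), tsum_mul_left,
      tsum_geometric_of_lt_one ht.1.le ht.2, div_eq_mul_inv]
  rw [setLIntegral_congr_fun measurableSet_Ioo geometric, lintegral_tsum fun n => by fun_prop]
  exact tsum_congr fun n => setLIntegral_neg_log_rpow_mul_rpow ha n.cast_add_one_pos

end LogarithmicMoments

section TripleIntegral

variable {a : ℝ}

lemma one_sub_add_mul_pos {z : ℝ} (ha : 0 < a) (hz : z ∈ Icc 0 1) : 0 < 1 - z + a * z := by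
  rcases hz.1.eq_or_lt with rfl | hz₀
  · simp
  · linarith [mul_pos ha hz₀, hz.2]

lemma integral_one_div_one_sub_add_mul (ha : 0 < a) (ha₁ : a ≠ 1) :
    ∫ z in (0 : ℝ)..1, 1 / (1 - z + a * z) = -log a / (1 - a) := by
  have affine (z : ℝ) : 1 - z + a * z = 1 + (a - 1) * z := by ring
  simp only [affine]
  rw [intervalIntegral.integral_comp_add_mul (fun x => 1 / x) (sub_ne_zero.2 ha₁), mul_zero,
    mul_one, add_zero, add_sub_cancel, integral_one_div_of_pos one_pos ha, div_one, smul_eq_mul,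
    inv_mul_eq_div, ← neg_div_neg_eq, neg_sub]

lemma setLIntegral_one_div_one_sub_add_mul (ha : 0 < a) (ha₁ : a ≠ 1) :
    ∫⁻ z in Ioo 0 1, ENNReal.ofReal (1 / (1 - z + a * z)) =
      ENNReal.ofReal (-log a / (1 - a)) := by
  have continuousOn : ContinuousOn (fun z => 1 / (1 - z + a * z)) (Icc 0 1) :=
    ContinuousOn.div (by fun_prop) (by fun_prop) fun z hz => (one_sub_add_mul_pos ha hz).ne'
  rw [setLIntegral_Ioo_ofReal_eq_ofReal_intervalIntegral zero_le_one
    (continuousOn.intervalIntegrable_of_Icc zero_le_one)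
    (fun z hz => (one_div_pos.2 (one_sub_add_mul_pos ha (Ioo_subset_Icc_self hz))).le),
    integral_one_div_one_sub_add_mul ha ha₁]

lemma setLIntegral_one_div_one_sub_add_mul_mul :
    ∫⁻ p in Ioo (0 : ℝ) 1 ×ˢ Ioo (0 : ℝ) 1 ×ˢ Ioo (0 : ℝ) 1,
        ENNReal.ofReal (1 / (1 - p.2.2 + p.1 * p.2.1 * p.2.2)) =
      ∫⁻ t in Ioo 0 1, ENNReal.ofReal (log t ^ 2 / (1 - t)) := by
  have inner_yz (x : ℝ) (hx : x ∈ Ioo 0 1) :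
      ∫⁻ q in Ioo (0 : ℝ) 1 ×ˢ Ioo (0 : ℝ) 1, ENNReal.ofReal (1 / (1 - q.2 + x * q.1 * q.2)) =
        ∫⁻ y in Ioo 0 1, ENNReal.ofReal (-log (x * y) / (1 - x * y)) := by
    refine (setLIntegral_prod _ (by fun_prop)).trans <|
      setLIntegral_congr_fun measurableSet_Ioo fun y hy => ?_
    exact setLIntegral_one_div_one_sub_add_mul (mul_pos hx.1 hy.1)
      (mul_lt_one_of_nonneg_of_lt_one_left hx.1.le hx.2 hy.2.le).ne
  refine (setLIntegral_prod _ (by fun_prop)).trans ?_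
  rw [setLIntegral_congr_fun measurableSet_Ioo inner_yz,
    setLIntegral_setLIntegral_comp_mul (f := fun t => ENNReal.ofReal (-log t / (1 - t)))
      (by fun_prop)]
  refine setLIntegral_congr_fun measurableSet_Ioo fun t ht => ?_
  rw [← ENNReal.ofReal_mul (neg_nonneg.2 (log_nonpos ht.1.le ht.2.le)), mul_div_assoc', ← sq,
    neg_sq]

lemma setLIntegral_one_div_one_sub_add_mul_mul_eq_tsum :
    ∫⁻ p in Ioo (0 : ℝ) 1 ×ˢ Ioo (0 : ℝ) 1 ×ˢ Ioo (0 : ℝ) 1,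
        ENNReal.ofReal (1 / (1 - p.2.2 + p.1 * p.2.1 * p.2.2)) =
      ENNReal.ofReal (2 * ∑' m : ℕ, 1 / ((m : ℝ) + 1) ^ 3) := by
  have summable_cubes : Summable fun m : ℕ => 1 / ((m : ℝ) + 1) ^ 3 := mod_cast
    (summable_nat_add_iff 1).2 (summable_one_div_nat_pow.2 (by norm_num : 1 < 3))
  have neg_log_rpow (t : ℝ) : (-log t) ^ ((3 : ℝ) - 1) = log t ^ 2 := by
    rw [← neg_sq, ← rpow_two]
    norm_num
  have gamma_term (m : ℕ) :
      Gamma 3 / ((m : ℝ) + 1) ^ (3 : ℝ) = 2 * (1 / ((m : ℝ) + 1) ^ 3) := by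
    rw [Gamma_ofNat_eq_factorial, mul_one_div]
    norm_cast
  have log_sq_integral := setLIntegral_neg_log_rpow_div_one_sub (a := 3) three_pos
  simp only [neg_log_rpow, gamma_term] at log_sq_integral
  rw [setLIntegral_one_div_one_sub_add_mul_mul, log_sq_integral, ← tsum_mul_left,
    ENNReal.ofReal_tsum_of_nonneg (fun m => by positivity) (summable_cubes.mul_left 2)]

end TripleIntegral

/-- The period integral representation
`ζ(3) = (1/2) ∫₀¹∫₀¹∫₀¹ dx dy dz / (1 - z + xyz)`, the triple integral over the open
unit cube being convergent. -/
theorem zeta3_integral_representation :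
    IntegrableOn
      (fun p : ℝ × ℝ × ℝ => 1 / (1 - p.2.2 + p.1 * p.2.1 * p.2.2))
      (Set.Ioo (0:ℝ) 1 ×ˢ Set.Ioo (0:ℝ) 1 ×ˢ Set.Ioo (0:ℝ) 1) ∧
    (∑' m : ℕ, 1 / ((m : ℝ) + 1) ^ 3)
      = (1 / 2) * ∫ p in Set.Ioo (0:ℝ) 1 ×ˢ Set.Ioo (0:ℝ) 1 ×ˢ Set.Ioo (0:ℝ) 1,
          1 / (1 - p.2.2 + p.1 * p.2.1 * p.2.2) := by
  have measurable : Measurable fun p : ℝ × ℝ × ℝ => 1 / (1 - p.2.2 + p.1 * p.2.1 * p.2.2) := by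
    fun_prop
  have nonneg : 0 ≤ᵐ[volume.restrict (Ioo (0 : ℝ) 1 ×ˢ Ioo (0 : ℝ) 1 ×ˢ Ioo (0 : ℝ) 1)]
      fun p => 1 / (1 - p.2.2 + p.1 * p.2.1 * p.2.2) :=
    ae_restrict_of_forall_mem (measurableSet_Ioo.prod (measurableSet_Ioo.prod measurableSet_Ioo))
      fun p ⟨hx, hy, hz⟩ => (one_div_pos.2
        (one_sub_add_mul_pos (mul_pos hx.1 hy.1) (Ioo_subset_Icc_self hz))).le
  constructor
  · rw [IntegrableOn, ← lintegral_ofReal_ne_top_iff_integrable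
      measurable.aestronglyMeasurable nonneg, setLIntegral_one_div_one_sub_add_mul_mul_eq_tsum]
    exact ENNReal.ofReal_ne_top
  · have tsum_nonneg : 0 ≤ 2 * ∑' m : ℕ, 1 / ((m : ℝ) + 1) ^ 3 := by positivity
    rw [integral_eq_lintegral_of_nonneg_ae nonneg measurable.aestronglyMeasurable,
      setLIntegral_one_div_one_sub_add_mul_mul_eq_tsum, ENNReal.toReal_ofReal tsum_nonneg]
    ring
end
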